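/- arXiv:1609.06911 — 5 statements merged into one kernel-verified Lean document; each statement's English description precedes it below -/
import Mathlib

section
/- For every natural number N, there exists a pair of connected graphs G and H on the same number of vertices, with more than N vertices, such that G and H are D-cospectral, diam(G) ≠ diam(H), and W(G) ≠ W(H). In particular, there are infinitely many pairs of D-cospectral graphs that have different diameters and different Wiener indices. -/
open SimpleGraph

/-- The distance matrix of a graph `G`, with real entries: the `(u,v)` entry is the
distance between `u` and `v` in `G`. -/
noncomputable def distMatrix {V : Type*} [Fintype V] (G : SimpleGraph V) : Matrix V V ℝ :=
  fun u v => (G.dist u v : ℝ)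

/-- The Wiener index of a graph `G`: half the sum of the distances between all ordered
pairs of vertices, i.e. the sum of distances over all unordered pairs. -/
noncomputable def wienerIndex {V : Type*} [Fintype V] (G : SimpleGraph V) : ℚ :=
  (∑ u : V, ∑ v : V, (G.dist u v : ℚ)) / 2

/-! Replacing each vertex by a clique on `m` vertices turns a distance matrix `D` on `n` vertices
into `P (D + 1) Pᵀ - 1`, where `P` is the incidence matrix of the fibres. Since `Pᵀ P = m`, its
characteristic polynomial depends only on that of `D`, so this clique blow-up preserves
`D`-cospectrality. It also preserves the diameter, and it changes the Wiener index by an injective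
affine map depending only on `n` and `m`. Hence a single suitable pair of graphs, here on ten
vertices, gives infinitely many. -/

open Finset Matrix Polynomial

section Distance

variable {V : Type*} {G : SimpleGraph V} {w : V}

lemma le_add_edist_of_forall_adj {φ : V → ℕ∞} (hφ : ∀ u v, G.Adj u v → φ u ≤ φ v + 1) (u v : V) :
    φ u ≤ φ v + G.edist u v := by
  have le_add_length {u : V} (p : G.Walk u v) : φ u ≤ φ v + p.length := by
    induction p with
    | nil => simp
    | cons hadj p ih =>
      rw [Walk.length_cons, Nat.cast_add, Nat.cast_one, ← add_assoc]
      exact (hφ _ _ hadj).trans (by gcongr)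
  by_cases huv : G.edist u v = ⊤
  · simp [huv]
  · obtain ⟨p, hp⟩ := exists_walk_of_edist_ne_top huv
    exact hp ▸ le_add_length p

lemma edist_eq_of_forall_adj_of_forall_ne {φ : V → ℕ} (hw : φ w = 0)
    (hadj : ∀ u v, G.Adj u v → φ u ≤ φ v + 1)
    (hdesc : ∀ u, u ≠ w → ∃ v, G.Adj u v ∧ φ u = φ v + 1) (u : V) : G.edist u w = φ u := by
  refine le_antisymm ?_ ?_
  · induction h : φ u generalizing u with
    | zero =>
      obtain rfl : u = w := by
        by_contra hne
        obtain ⟨v, -, hv⟩ := hdesc u hne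
        omega
      simp
    | succ k ih =>
      obtain ⟨v, huv, hv⟩ := hdesc u (by rintro rfl; omega)
      calc G.edist u w ≤ G.edist u v + G.edist v w := G.edist_triangle
        _ ≤ 1 + k := add_le_add (edist_eq_one_iff_adj.2 huv).le (ih v (by omega))
        _ = (k + 1 : ℕ) := by rw [add_comm, Nat.cast_succ]
  · simpa [hw] using le_add_edist_of_forall_adj (φ := fun v ↦ (φ v : ℕ∞))
      (fun u v huv ↦ mod_cast hadj u v huv) u w

lemma edist_map_le_of_forall_adj {W : Type*} {H : SimpleGraph W} {f : V → W}
    (hf : ∀ u v, G.Adj u v → H.edist (f u) (f v) ≤ 1) (u v : V) :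
    H.edist (f u) (f v) ≤ G.edist u v := by
  have lipschitz (x y : V) (hxy : G.Adj x y) :
      H.edist (f x) (f v) ≤ H.edist (f y) (f v) + 1 := by
    rw [add_comm]
    exact SimpleGraph.edist_triangle.trans (by gcongr; exact hf x y hxy)
  simpa using le_add_edist_of_forall_adj lipschitz u v

lemma diam_eq_of_forall_edist_eq {d : V → V → ℕ} {k : ℕ} (hd : ∀ u v, G.edist u v = d u v)
    (hle : ∀ u v, d u v ≤ k) (hk : ∃ u v, d u v = k) : G.diam = k := by
  obtain ⟨u, v, huv⟩ := hk
  have hediam : G.ediam = k := le_antisymm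
    (ediam_le_of_edist_le fun u v ↦ by rw [hd]; exact mod_cast hle u v)
    (by rw [← huv, ← hd]; exact edist_le_ediam)
  rw [diam, hediam, ENat.toNat_natCast]

end Distance

section Fibers

variable {V W : Type*} [Fintype V] [DecidableEq W] {f : V → W} {m : ℕ}

lemma surjective_of_card_fiber (hm : m ≠ 0) (hf : ∀ w, #{v | f v = w} = m) :
    Function.Surjective f := fun w ↦ by
  obtain ⟨v, hv⟩ := card_ne_zero.1 ((hf w).trans_ne hm)
  exact ⟨v, (mem_filter.1 hv).2⟩

lemma sum_comp_of_card_fiber [Fintype W] {M : Type*} [AddCommMonoid M]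
    (hf : ∀ w, #{v | f v = w} = m) (k : W → M) : ∑ v, k (f v) = m • ∑ w, k w := by
  rw [← sum_fiberwise univ f, smul_sum]
  refine sum_congr rfl fun w _ ↦ ?_
  rw [← hf w, ← sum_const]
  exact sum_congr rfl fun v hv ↦ by rw [(mem_filter.1 hv).2]

lemma card_fiber_divNat (n m : ℕ) (i : Fin n) : #{x : Fin (n * m) | x.divNat = i} = m := by
  have hcard : #{p : Fin n × Fin m | p.1 = i} = m := by
    have hprod : ({p | p.1 = i} : Finset (Fin n × Fin m)) = {i} ×ˢ univ := by
      ext ⟨j, k⟩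
      simp [eq_comm]
    rw [hprod, card_product, card_singleton, card_univ, Fintype.card_fin, one_mul]
  exact (card_equiv finProdFinEquiv.symm (by simp)).trans hcard

end Fibers

section Charpoly

variable {V W : Type*} [Fintype V] [DecidableEq V] [Fintype W] [DecidableEq W]

lemma charpoly_smul_eq_comp {K : Type*} [Field K] {c : K} (hc : c ≠ 0) (A : Matrix W W K) :
    (c • A).charpoly = C c ^ Fintype.card W * A.charpoly.comp (C c⁻¹ * X) := by
  have hmat : (c • A).charmatrix = C c • A.charmatrix.map (compRingHom (C c⁻¹ * X)) := by
    ext1 i j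
    have hX : C c * (C c⁻¹ * X) = X := by
      rw [← mul_assoc, ← C_mul, mul_inv_cancel₀ hc, C_1, one_mul]
    by_cases hij : i = j <;> simp [hij, mul_sub, hX]
  rw [charpoly, hmat, det_smul, charpoly, ← coe_compRingHom_apply, RingHom.map_det]
  rfl

lemma charpoly_add_one_eq_comp {R : Type*} [CommRing R] (A : Matrix W W R) :
    (A + 1).charpoly = A.charpoly.comp (X - 1) := by
  simpa [sub_eq_add_neg] using charpoly_sub_scalar A (-1)

lemma charpoly_eq_of_mul_eq_mul {R : Type*} [CommRing R] [IsDomain R] {S A B : Matrix W W R}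
    (hS : S.det ≠ 0) (h : S * A = B * S) : A.charpoly = B.charpoly := by
  have hchar : S.map C * A.charmatrix = B.charmatrix * S.map C := by
    simp only [charmatrix, mul_sub, sub_mul, RingHom.mapMatrix_apply, ← Matrix.map_mul, h]
    rw [(scalar_commute X (fun _ ↦ Commute.all _ _) (S.map C)).eq]
  have hdet : (S.map C).det ≠ 0 := by
    rw [← RingHom.mapMatrix_apply, ← RingHom.map_det]
    exact C_ne_zero.2 hS
  refine mul_left_cancel₀ hdet ?_
  rw [charpoly, charpoly, ← det_mul, hchar, det_mul, mul_comm]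

-- The submatrix is `P A Pᵀ`, with `P` the incidence matrix of the fibres, and `Pᵀ P = m`.
lemma X_pow_mul_charpoly_submatrix_of_card_fiber {R : Type*} [CommRing R] {f : V → W} {m : ℕ}
    (hf : ∀ w, #{v | f v = w} = m) (A : Matrix W W R) :
    X ^ Fintype.card W * (A.submatrix f f).charpoly =
      X ^ Fintype.card V * ((m : R) • A).charpoly := by
  let P : Matrix V W R := (1 : Matrix W W R).submatrix f id
  have hfactor : A.submatrix f f = P * A.submatrix id f := by
    ext u v
    simp [P, mul_apply, one_apply]
  have hgram : A.submatrix id f * P = (m : R) • A := by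
    ext w w'
    simpa [P, mul_apply, one_apply] using
      sum_comp_of_card_fiber hf fun x ↦ A w x * (1 : Matrix W W R) x w'
  rw [hfactor, charpoly_mul_comm', hgram]

end Charpoly

section CliqueBlowup

variable {V W : Type*} {G H : SimpleGraph W} {f : V → W} {m : ℕ}

/-- The clique blow-up of `G` along `f : V → W`: every vertex `w` of `G` is replaced by a clique
on the fibre `f ⁻¹' {w}`, and the fibres over adjacent vertices are completely joined. -/
def cliqueBlowup (G : SimpleGraph W) (f : V → W) : SimpleGraph V where
  Adj u v := u ≠ v ∧ (f u = f v ∨ G.Adj (f u) (f v))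
  symm := ⟨fun _ _ h ↦ ⟨h.1.symm, h.2.imp Eq.symm SimpleGraph.Adj.symm⟩⟩
  loopless := ⟨fun _ h ↦ h.1 rfl⟩

lemma edist_cliqueBlowup_of_eq {u v : V} (huv : u ≠ v) (h : f u = f v) :
    (cliqueBlowup G f).edist u v = 1 :=
  edist_eq_one_iff_adj.2 ⟨huv, Or.inl h⟩

lemma edist_cliqueBlowup_of_ne (hf : f.Surjective) {u v : V} (h : f u ≠ f v) :
    (cliqueBlowup G f).edist u v = G.edist (f u) (f v) := by
  classical
  refine le_antisymm ?_ (edist_map_le_of_forall_adj (fun x y hxy ↦ ?_) u v)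
  · -- A section of `f` through `u` and `v` embeds `G` into its blow-up.
    let g : W → V := Function.update (Function.update (Function.surjInv hf) (f u) u) (f v) v
    have hgu : g (f u) = u := by simp [g, h]
    have hgv : g (f v) = v := by simp [g]
    have hfg (w : W) : f (g w) = w := by
      simp only [g, Function.update_apply]
      split_ifs with h₁ h₂
      · exact h₁.symm
      · exact h₂.symm
      · exact Function.surjInv_eq hf w
    have hadj (x y : W) (hxy : G.Adj x y) : (cliqueBlowup G f).edist (g x) (g y) ≤ 1 := by
      have hadj' : (cliqueBlowup G f).Adj (g x) (g y) :=
        ⟨fun hg ↦ hxy.ne (by rw [← hfg x, hg, hfg]), Or.inr (by rwa [hfg, hfg])⟩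
      exact (edist_eq_one_iff_adj.2 hadj').le
    simpa only [hgu, hgv] using edist_map_le_of_forall_adj hadj (f u) (f v)
  · exact edist_le_one_iff_adj_or_eq.2 hxy.2.symm

lemma dist_cliqueBlowup_add_ite [DecidableEq V] [DecidableEq W] (hf : f.Surjective) (u v : V) :
    (cliqueBlowup G f).dist u v + (if u = v then 1 else 0) =
      G.dist (f u) (f v) + if f u = f v then 1 else 0 := by
  rcases eq_or_ne u v with rfl | huv
  · simp
  by_cases h : f u = f v
  · simp [SimpleGraph.dist, edist_cliqueBlowup_of_eq huv h, huv, h]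
  · simp [SimpleGraph.dist, edist_cliqueBlowup_of_ne hf h, huv, h]

lemma connected_cliqueBlowup (hG : G.Connected) (hf : f.Surjective) :
    (cliqueBlowup G f).Connected := by
  have := hG.nonempty
  have := hf.nonempty
  refine ⟨fun u v ↦ ?_⟩
  rcases eq_or_ne u v with rfl | huv
  · exact Reachable.refl u
  rw [← edist_ne_top_iff_reachable]
  by_cases h : f u = f v
  · simp [edist_cliqueBlowup_of_eq huv h]
  · rw [edist_cliqueBlowup_of_ne hf h]
    exact edist_ne_top_iff_reachable.2 (hG _ _)

lemma diam_cliqueBlowup [Nontrivial W] (hf : f.Surjective) :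
    (cliqueBlowup G f).diam = G.diam := by
  suffices h : (cliqueBlowup G f).ediam = G.ediam by rw [diam, diam, h]
  refine le_antisymm (ediam_le_of_edist_le fun u v ↦ ?_) (ediam_le_of_edist_le fun w w' ↦ ?_)
  · rcases eq_or_ne u v with rfl | huv
    · simp
    by_cases h : f u = f v
    · rw [edist_cliqueBlowup_of_eq huv h]
      exact Order.one_le_iff_ne_zero.2 ediam_ne_zero
    · rw [edist_cliqueBlowup_of_ne hf h]
      exact edist_le_ediam
  · obtain ⟨u, rfl⟩ := hf w
    obtain ⟨v, rfl⟩ := hf w'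
    by_cases h : f u = f v
    · simp [h]
    · rw [← edist_cliqueBlowup_of_ne hf h]
      exact edist_le_ediam

variable [Fintype V] [Fintype W] [DecidableEq W]

lemma distMatrix_cliqueBlowup [DecidableEq V] (hf : f.Surjective) :
    distMatrix (cliqueBlowup G f) = (distMatrix G + 1).submatrix f f - 1 := by
  rw [eq_sub_iff_add_eq]
  ext u v
  simpa [distMatrix, one_apply] using
    congrArg (Nat.cast (R := ℝ)) (dist_cliqueBlowup_add_ite hf u v)

theorem charpoly_distMatrix_cliqueBlowup_congr [DecidableEq V] (hm : m ≠ 0)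
    (hf : ∀ w, #{v | f v = w} = m) (h : (distMatrix G).charpoly = (distMatrix H).charpoly) :
    (distMatrix (cliqueBlowup G f)).charpoly = (distMatrix (cliqueBlowup H f)).charpoly := by
  have hsmul : ((m : ℝ) • (distMatrix G + 1)).charpoly =
      ((m : ℝ) • (distMatrix H + 1)).charpoly := by
    have hm' : (m : ℝ) ≠ 0 := Nat.cast_ne_zero.2 hm
    rw [charpoly_smul_eq_comp hm', charpoly_smul_eq_comp hm', charpoly_add_one_eq_comp,
      charpoly_add_one_eq_comp, h]
  have hsub : ((distMatrix G + 1).submatrix f f).charpoly =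
      ((distMatrix H + 1).submatrix f f).charpoly := by
    refine mul_left_cancel₀ (pow_ne_zero (Fintype.card W) X_ne_zero) ?_
    rw [X_pow_mul_charpoly_submatrix_of_card_fiber hf,
      X_pow_mul_charpoly_submatrix_of_card_fiber hf, hsmul]
  have hsurj := surjective_of_card_fiber hm hf
  have hone : (1 : Matrix V V ℝ) = scalar V 1 := (map_one _).symm
  rw [distMatrix_cliqueBlowup hsurj, distMatrix_cliqueBlowup hsurj, hone, charpoly_sub_scalar,
    charpoly_sub_scalar, hsub]

lemma two_mul_wienerIndex_cliqueBlowup_add_card (hm : m ≠ 0) (hf : ∀ w, #{v | f v = w} = m) :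
    2 * wienerIndex (cliqueBlowup G f) + Fintype.card V =
      m ^ 2 * (2 * wienerIndex G + Fintype.card W) := by
  classical
  have hsurj := surjective_of_card_fiber hm hf
  calc 2 * wienerIndex (cliqueBlowup G f) + Fintype.card V
      = ∑ u, ∑ v, (((cliqueBlowup G f).dist u v + if u = v then 1 else 0 : ℕ) : ℚ) := by
        simp [wienerIndex, sum_add_distrib, mul_div_cancel₀]
    _ = ∑ u, ∑ v, ((G.dist (f u) (f v) + if f u = f v then 1 else 0 : ℕ) : ℚ) := by
        simp only [dist_cliqueBlowup_add_ite hsurj]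
    _ = m ^ 2 * ∑ w, ∑ w', ((G.dist w w' + if w = w' then 1 else 0 : ℕ) : ℚ) := by
        let D (w w' : W) : ℚ := (G.dist w w' + if w = w' then 1 else 0 : ℕ)
        change ∑ u, ∑ v, D (f u) (f v) = m ^ 2 * ∑ w, ∑ w', D w w'
        simp only [sum_comp_of_card_fiber hf (D _), nsmul_eq_mul]
        rw [← mul_sum, sum_comp_of_card_fiber hf fun w ↦ ∑ w', D w w', nsmul_eq_mul]
        ring
    _ = m ^ 2 * (2 * wienerIndex G + Fintype.card W) := by
        simp [wienerIndex, sum_add_distrib, mul_div_cancel₀]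

theorem wienerIndex_cliqueBlowup_inj (hm : m ≠ 0) (hf : ∀ w, #{v | f v = w} = m) :
    wienerIndex (cliqueBlowup G f) = wienerIndex (cliqueBlowup H f) ↔
      wienerIndex G = wienerIndex H := by
  have hG := two_mul_wienerIndex_cliqueBlowup_add_card (G := G) hm hf
  have hH := two_mul_wienerIndex_cliqueBlowup_add_card (G := H) hm hf
  have hm' : (m : ℚ) ^ 2 ≠ 0 := by positivity
  constructor <;> intro h
  · rw [h, hH] at hG
    linarith [mul_left_cancel₀ hm' hG]
  · rw [h, ← hH] at hG
    linarith

end CliqueBlowup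

section BasePair

/-- A triangle `{4, 5, 6}` with a pendant vertex at each of its corners (`7`, `8` and `9`), joined
to the `4`-cycle on `{0, 1, 2, 3}`, in which the edges are the pairs of different parity. -/
def cycleJoinNet : SimpleGraph (Fin 10) :=
  fromRel fun u v ↦
    (u < 4 ∧ v < 4 ∧ Odd (u + v : ℕ)) ∨ (u < 7 ∧ 4 ≤ v ∧ v < 7) ∨ (4 ≤ u ∧ (v : ℕ) = u + 3)

/-- The wheel with hub `8` and rim the `8`-cycle on `{0, …, 7}`, with a pendant vertex `9` at the
hub. -/
def pendantWheel : SimpleGraph (Fin 10) :=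
  fromRel fun u v ↦ (u < 8 ∧ v < 8 ∧ (v : ℕ) = (u + 1) % 8) ∨ u = 8

instance : DecidableRel cycleJoinNet.Adj := inferInstanceAs (DecidableRel (fromRel _).Adj)

instance : DecidableRel pendantWheel.Adj := inferInstanceAs (DecidableRel (fromRel _).Adj)

/-- The distances in `cycleJoinNet`, in computable form. -/
def cycleJoinNetDist (u v : Fin 10) : ℕ :=
  if u = v then 0 else if cycleJoinNet.Adj u v then 1 else if 7 ≤ u ∧ 7 ≤ v then 3 else 2

/-- The distances in `pendantWheel`, in computable form. -/
def pendantWheelDist (u v : Fin 10) : ℕ :=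
  if u = v then 0 else if pendantWheel.Adj u v then 1 else 2

lemma edist_cycleJoinNet (u v : Fin 10) : cycleJoinNet.edist u v = cycleJoinNetDist u v := by
  refine edist_eq_of_forall_adj_of_forall_ne (φ := (cycleJoinNetDist · v)) ?_ ?_ ?_ u <;>
    revert v <;> decide +kernel

lemma edist_pendantWheel (u v : Fin 10) : pendantWheel.edist u v = pendantWheelDist u v := by
  refine edist_eq_of_forall_adj_of_forall_ne (φ := (pendantWheelDist · v)) ?_ ?_ ?_ u <;>
    revert v <;> decide +kernel

lemma diam_cycleJoinNet : cycleJoinNet.diam = 3 :=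
  diam_eq_of_forall_edist_eq edist_cycleJoinNet (by decide +kernel) (by decide +kernel)

lemma diam_pendantWheel : pendantWheel.diam = 2 :=
  diam_eq_of_forall_edist_eq edist_pendantWheel (by decide +kernel) (by decide +kernel)

lemma connected_cycleJoinNet : cycleJoinNet.Connected :=
  connected_iff_diam_ne_zero.2 (by simp [diam_cycleJoinNet])

lemma connected_pendantWheel : pendantWheel.Connected :=
  connected_iff_diam_ne_zero.2 (by simp [diam_pendantWheel])

lemma wienerIndex_cycleJoinNet : wienerIndex cycleJoinNet = 71 := by
  have hsum : ∑ u, ∑ v, cycleJoinNetDist u v = 142 := by decide +kernel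
  simp only [wienerIndex, SimpleGraph.dist, edist_cycleJoinNet, ENat.toNat_natCast]
  rw [div_eq_iff two_ne_zero]
  exact mod_cast hsum

lemma wienerIndex_pendantWheel : wienerIndex pendantWheel = 73 := by
  have hsum : ∑ u, ∑ v, pendantWheelDist u v = 146 := by decide +kernel
  simp only [wienerIndex, SimpleGraph.dist, edist_pendantWheel, ENat.toNat_natCast]
  rw [div_eq_iff two_ne_zero]
  exact mod_cast hsum

/-- An integral matrix intertwining the distance matrices of `cycleJoinNet` and `pendantWheel`,
found by reducing a basis of the 16-dimensional lattice of all such matrices. -/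
def intertwiner : Matrix (Fin 10) (Fin 10) ℤ :=
  !![3, 0, 0, 0, 0, -3, 3, -1, 2, 2;
     0, 3, 0, 0, 0, 2, -2, 1, -1, 3;
     0, 0, 3, 0, 0, -1, 1, 3, 0, 0;
     0, 0, 0, 3, 2, -2, 0, 3, 1, -1;
     3, 0, 0, 0, 0, 3, -3, 3, 0, 0;
     0, 3, 0, 0, 0, -2, 2, 1, 3, -1;
     0, 0, 3, 0, 0, 1, -1, -1, 2, 2;
     0, 0, 0, 3, -2, 2, 0, -1, 1, 3;
     -4, -4, -4, -4, 8, 8, 8, 0, 0, 0;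
     2, 2, 2, 2, 0, 0, 0, 0, 0, 0]

/-- The rational inverse of `intertwiner`, multiplied by `24`, which certifies that
`intertwiner` is nonsingular. -/
def intertwinerScaledInv : Matrix (Fin 10) (Fin 10) ℤ :=
  !![3, -1, -1, -1, 3, -1, -1, -1, 0, 3;
     -1, 3, -1, -1, -1, 3, -1, -1, 0, 3;
     -1, -1, 3, -1, -1, -1, 3, -1, 0, 3;
     -1, -1, -1, 3, -1, -1, -1, 3, 0, 3;
     1, 2, -3, 4, -1, -2, 3, -4, 1, 2;
     -2, -1, 0, -2, 2, 1, 0, 2, 1, 2;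
     1, -1, 3, -2, -1, 1, -3, 2, 1, 2;
     0, 1, 4, 1, 2, 1, -2, 1, 0, -3;
     0, -2, -2, 1, 2, 4, 4, 1, 0, -3;
     3, 4, 1, 1, -1, -2, 1, 1, 0, -3]

lemma det_intertwiner_ne_zero : intertwiner.det ≠ 0 := by
  have hmul : intertwinerScaledInv * intertwiner = (24 : ℤ) • 1 := by decide +kernel
  have hdet : intertwinerScaledInv.det * intertwiner.det = 24 ^ 10 := by
    rw [← det_mul, hmul, det_smul, det_one, mul_one, Fintype.card_fin]
  exact right_ne_zero_of_mul (hdet.trans_ne (by norm_num))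

lemma charpoly_distMatrix_cycleJoinNet :
    (distMatrix cycleJoinNet).charpoly = (distMatrix pendantWheel).charpoly := by
  let A : Matrix (Fin 10) (Fin 10) ℤ := of fun u v ↦ cycleJoinNetDist u v
  let B : Matrix (Fin 10) (Fin 10) ℤ := of fun u v ↦ pendantWheelDist u v
  have hA : distMatrix cycleJoinNet = A.map (Int.castRingHom ℝ) := by
    ext u v
    simp [A, distMatrix, SimpleGraph.dist, edist_cycleJoinNet]
  have hB : distMatrix pendantWheel = B.map (Int.castRingHom ℝ) := by
    ext u v
    simp [B, distMatrix, SimpleGraph.dist, edist_pendantWheel]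
  have hAB : intertwiner * A = B * intertwiner := by decide +kernel
  rw [hA, hB, charpoly_map, charpoly_map,
    charpoly_eq_of_mul_eq_mul det_intertwiner_ne_zero hAB]

end BasePair

/-- There are infinitely many pairs of `D`-cospectral graphs with different diameters and
different Wiener indices: for every `N` there are connected `D`-cospectral graphs `G`, `H`
on a common number `n > N` of vertices with `diam G ≠ diam H` and `W(G) ≠ W(H)`. -/
theorem exists_D_cospectral_diff_diam_diff_wiener (N : ℕ) :
    ∃ (n : ℕ), N < n ∧ ∃ (G H : SimpleGraph (Fin n)),
      G.Connected ∧ H.Connected ∧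
      (distMatrix G).charpoly = (distMatrix H).charpoly ∧
      G.diam ≠ H.diam ∧
      wienerIndex G ≠ wienerIndex H := by
  let f : Fin (10 * (N + 1)) → Fin 10 := Fin.divNat
  have hm : N + 1 ≠ 0 := N.succ_ne_zero
  have hf (w : Fin 10) : #{v | f v = w} = N + 1 := card_fiber_divNat 10 (N + 1) w
  have hsurj : f.Surjective := surjective_of_card_fiber hm hf
  refine ⟨10 * (N + 1), by omega, cliqueBlowup cycleJoinNet f, cliqueBlowup pendantWheel f,
    connected_cliqueBlowup connected_cycleJoinNet hsurj,
    connected_cliqueBlowup connected_pendantWheel hsurj,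
    charpoly_distMatrix_cliqueBlowup_congr hm hf charpoly_distMatrix_cycleJoinNet, ?_, ?_⟩
  · rw [diam_cliqueBlowup hsurj, diam_cliqueBlowup hsurj, diam_cycleJoinNet, diam_pendantWheel]
    norm_num
  · rw [Ne, wienerIndex_cliqueBlowup_inj hm hf, wienerIndex_cycleJoinNet, wienerIndex_pendantWheel]
    norm_num
end

section
/- If G is a connected transmission-regular graph on n > 2 vertices, then G has no cut vertex; that is, for every vertex v of G, the graph G − v obtained by deleting v remains connected. -/
open SimpleGraph Finset

/-- The transmission index of a vertex `v` of a graph `G`: the sum of the distances from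
`v` to all vertices of `G`. -/
noncomputable def transmission {V : Type*} [Fintype V] (G : SimpleGraph V) (v : V) : ℕ :=
  ∑ u : V, G.dist v u

/-!
Let `C` be a component of `G - v` and `u ∈ C` a neighbour of `v`. Walks leaving `C` pass through
`v`, so moving from `u` to `v` brings every vertex outside `C` one step closer, while a vertex of
`C` gets at most one step farther. Hence `T(v) + |Cᶜ| ≤ T(u) + |C|`, and `T(u) ≤ T(v)` forces `C`
to contain at least half of the vertices of `G`. Two components of `G - v` cannot both do so, as
they are disjoint and miss `v`.
-/

section ComponentCompl

variable {V : Type*} {G : SimpleGraph V}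

theorem ssubset_compl_of_componentCompl_ne {K : Set V} (hK : K.Nonempty)
    {C D : G.ComponentCompl K} (hCD : C ≠ D) : (C : Set V) ⊂ (D : Set V)ᶜ := by
  obtain ⟨k, hk⟩ := hK
  have hsub : (C : Set V) ⊆ (D : Set V)ᶜ :=
    (ComponentCompl.pairwise_disjoint hCD).subset_compl_right
  exact (Set.ssubset_iff_of_subset hsub).2
    ⟨k, fun hkD ↦ ComponentCompl.notMem_of_mem hkD hk,
      fun hkC ↦ ComponentCompl.notMem_of_mem hkC hk⟩

theorem exists_mem_support_of_mem_componentCompl {K : Set V} {C : G.ComponentCompl K} {u w : V}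
    (p : G.Walk u w) (hu : u ∈ C) (hw : w ∉ C) : ∃ k ∈ K, k ∈ p.support := by
  obtain ⟨d, hd, hfst, hsnd⟩ := p.exists_boundary_dart C hu hw
  have hK : d.snd ∈ K := by
    by_contra hK
    exact hsnd (ComponentCompl.mem_of_adj _ _ hfst hK d.adj)
  exact ⟨d.snd, hK, p.dart_snd_mem_support_of_mem_darts hd⟩

theorem dist_add_dist_le_length_of_mem_support {u v w : V} (p : G.Walk u w)
    (hv : v ∈ p.support) : G.dist u v + G.dist v w ≤ p.length := by
  classical
  calc G.dist u v + G.dist v w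
      ≤ (p.takeUntil v hv).length + (p.dropUntil v hv).length :=
        add_le_add (dist_le _) (dist_le _)
    _ = p.length := by rw [← Walk.length_append, p.take_spec hv]

theorem dist_add_dist_le_of_mem_componentCompl {u v w : V} {C : G.ComponentCompl {v}}
    (h : G.Reachable u w) (hu : u ∈ C) (hw : w ∉ C) :
    G.dist u v + G.dist v w ≤ G.dist u w := by
  obtain ⟨p, hp⟩ := h.exists_walk_length_eq_dist
  obtain ⟨_, rfl, hv⟩ := exists_mem_support_of_mem_componentCompl p hu hw
  exact hp ▸ dist_add_dist_le_length_of_mem_support p hv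

end ComponentCompl

section Transmission

variable {V : Type*} [Fintype V] {G : SimpleGraph V} {v : V}

theorem transmission_add_ncard_compl_le (hG : G.Connected) {u : V} {C : G.ComponentCompl {v}}
    (hu : u ∈ C) (huv : G.Adj u v) :
    transmission G v + (C : Set V)ᶜ.ncard ≤ transmission G u + (C : Set V).ncard := by
  classical
  have hdist : G.dist u v = 1 := dist_eq_one_iff_adj.2 huv
  have hpointwise (x : V) :
      G.dist v x + (if x ∉ C then 1 else 0) ≤ G.dist u x + (if x ∈ C then 1 else 0) := by
    by_cases hx : x ∈ C
    · have := hG.dist_triangle (u := v) (v := u) (w := x)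
      rw [G.dist_comm (u := v) (v := u), hdist] at this
      simpa [hx, add_comm] using this
    · have := dist_add_dist_le_of_mem_componentCompl (hG u x) hu hx
      rw [hdist] at this
      simpa [hx, add_comm] using this
  have hsum := sum_le_sum fun x (_ : x ∈ univ) ↦ hpointwise x
  simp only [sum_add_distrib, sum_boole, Nat.cast_id] at hsum
  simpa only [transmission, Set.ncard_eq_toFinset_card', Set.toFinset_card, Fintype.card_subtype,
    Set.mem_compl_iff, SetLike.mem_coe] using hsum

theorem ncard_compl_le_ncard_of_transmission_le (hG : G.Connected)
    (hv : ∀ u, G.Adj v u → transmission G u ≤ transmission G v) (C : G.ComponentCompl {v}) :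
    (C : Set V)ᶜ.ncard ≤ (C : Set V).ncard := by
  obtain ⟨⟨u, w⟩, hu, hw, huv⟩ :=
    ComponentCompl.exists_adj_boundary_pair hG.preconnected (Set.singleton_nonempty v) C
  obtain rfl : w = v := hw
  refine Nat.le_of_add_le_add_left (a := transmission G w) ?_
  calc transmission G w + (C : Set V)ᶜ.ncard
      ≤ transmission G u + (C : Set V).ncard := transmission_add_ncard_compl_le hG hu huv
    _ ≤ transmission G w + (C : Set V).ncard := Nat.add_le_add_right (hv u huv.symm) _

theorem subsingleton_componentCompl_of_transmission_le (hG : G.Connected)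
    (hv : ∀ u, G.Adj v u → transmission G u ≤ transmission G v) :
    Subsingleton (G.ComponentCompl {v}) := by
  have hlt {C D : G.ComponentCompl {v}} (hCD : C ≠ D) : (C : Set V).ncard < (D : Set V).ncard :=
    calc (C : Set V).ncard
        < (D : Set V)ᶜ.ncard :=
          Set.ncard_lt_ncard (ssubset_compl_of_componentCompl_ne (Set.singleton_nonempty v) hCD)
      _ ≤ (D : Set V).ncard := ncard_compl_le_ncard_of_transmission_le hG hv D
  exact ⟨fun C D ↦ by_contra fun hCD ↦ (hlt hCD).asymm (hlt (Ne.symm hCD))⟩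

theorem transmissionRegular_no_cutVertex_general [Nontrivial V] (hG : G.Connected)
    (hv : ∀ u, G.Adj v u → transmission G u ≤ transmission G v) :
    (G.induce ({v}ᶜ : Set V)).Connected := by
  have := subsingleton_componentCompl_of_transmission_le hG hv
  have : Nonempty ({v}ᶜ : Set V) := (Set.nonempty_compl_of_nontrivial v).to_subtype
  exact ⟨fun _ _ ↦ ConnectedComponent.exact (Subsingleton.elim _ _)⟩

end Transmission

/-- A connected transmission-regular graph on more than two vertices has no cut vertex:
deleting any vertex leaves a connected graph. -/
theorem transmissionRegular_no_cutVertex {V : Type*} [Fintype V] (G : SimpleGraph V)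
    (hG : G.Connected) (hn : 2 < Fintype.card V)
    (htr : ∀ u v : V, transmission G u = transmission G v) :
    ∀ v : V, (G.induce ({v}ᶜ : Set V)).Connected := by
  have : Nontrivial V := Fintype.one_lt_card_iff_nontrivial.1 (by omega)
  exact fun v ↦ transmissionRegular_no_cutVertex_general hG fun u _ ↦ (htr u v).le
end

section
/- If G is a connected k-transmission-regular graph on n vertices, then k ≤ ⌊n²/4⌋; moreover, for n > 2, equality k = ⌊n²/4⌋ holds if and only if G is the cycle graph C_n. -/
open SimpleGraph Finset

/-!
Let `v` be a vertex of a connected graph. If a level set `{u | d(v, u) = i}` with `0 < i` is a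
single vertex `w` and some vertex lies farther from `v`, then `w` separates the vertices nearer to
`v` from those farther away. One of the two sides has fewer than `n / 2` vertices. Moving from `w`
a distance `d` into that side takes every vertex outside it farther away by exactly `d` and brings
each vertex inside it closer by at most `d`, so the transmission grows. In a transmission-regular
graph every level but the zeroth and the last therefore has at least two vertices, so as long as
some vertex is at distance more than `j` from `v`, at least `2j` of the `n - 1` vertices other
than `v` are at distance at most `j`. Hence the transmission `∑ⱼ #{u | j < d(v, u)}` is at most
`∑ⱼ max (n - 1 - 2j) 0 = ⌊n² / 4⌋`. Equality forces the level at distance one to have exactly two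
vertices, and a connected 2-regular graph is a cycle. Conversely, in a graph of maximum degree two
no level but the zeroth exceeds two vertices, which reverses the estimate.
-/

section LevelSets

variable {ι : Type*} (s : Finset ι) (f : ι → ℕ)

lemma sum_eq_sum_range_card_lt {N : ℕ} (hN : ∀ x ∈ s, f x ≤ N) :
    ∑ x ∈ s, f x = ∑ j ∈ range N, #{x ∈ s | j < f x} := by
  simp_rw [card_filter]
  rw [sum_comm]
  refine sum_congr rfl fun x hx ↦ ?_
  have hrange : {j ∈ range N | j < f x} = range (f x) := by
    ext j
    have := hN x hx
    simp only [mem_filter, mem_range]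
    lia
  rw [← card_filter, hrange, card_range]

lemma card_lt_eq_card_eq_add_card_lt (j : ℕ) :
    #{x ∈ s | j < f x} = #{x ∈ s | f x = j + 1} + #{x ∈ s | j + 1 < f x} := by
  classical
  rw [← card_union_of_disjoint (disjoint_filter.mpr fun _ _ _ ↦ by lia), ← filter_or]
  congr 1
  ext x
  simp only [mem_filter]
  lia

lemma sum_range_sub_two_mul {m N : ℕ} (hN : m ≤ 2 * N) :
    ∑ j ∈ range N, (m - 2 * j) = (m + 1) ^ 2 / 4 := by
  induction m using Nat.twoStepInduction generalizing N with
  | zero => simp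
  | one =>
    obtain ⟨M, rfl⟩ := Nat.exists_eq_add_of_lt (show 0 < N by lia)
    simp [sum_range_succ', Nat.mul_add]
  | more m ih _ =>
    obtain ⟨M, rfl⟩ := Nat.exists_eq_add_of_lt (show 0 < N by lia)
    have hshift (j : ℕ) : m + 2 - 2 * (j + 1) = m - 2 * j := by lia
    have hsq : (m + 2 + 1) ^ 2 = (m + 1) ^ 2 + (m + 2) * 4 := by ring
    rw [zero_add, sum_range_succ', hsq, Nat.add_mul_div_right _ _ (by norm_num)]
    simp only [hshift]
    rw [ih (by lia), mul_zero, Nat.sub_zero]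

lemma exists_sum_eq_and_sq_div_four_eq :
    ∃ N > 1, ∑ x ∈ s, f x = ∑ j ∈ range N, #{x ∈ s | j < f x} ∧
      (#{x ∈ s | 0 < f x} + 1) ^ 2 / 4 = ∑ j ∈ range N, (#{x ∈ s | 0 < f x} - 2 * j) :=
  ⟨s.sup f + #{x ∈ s | 0 < f x} + 2, by lia,
    sum_eq_sum_range_card_lt s f fun _ hx ↦ (le_sup hx).trans (by lia),
    (sum_range_sub_two_mul (by lia)).symm⟩

variable {s f}

lemma card_lt_le_of_two_le_card_eq
    (h : ∀ i, 0 < i → (∃ x ∈ s, i < f x) → 2 ≤ #{x ∈ s | f x = i}) (j : ℕ) :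
    #{x ∈ s | j < f x} ≤ #{x ∈ s | 0 < f x} - 2 * j := by
  induction j with
  | zero => simp
  | succ j ih =>
    obtain hempty | ⟨x, hx⟩ := {x ∈ s | j + 1 < f x}.eq_empty_or_nonempty
    · simp [hempty]
    · have := h (j + 1) j.succ_pos ⟨x, mem_filter.mp hx⟩
      have := card_lt_eq_card_eq_add_card_lt s f j
      lia

lemma le_card_lt_of_card_eq_le_two (h : ∀ i, 0 < i → #{x ∈ s | f x = i} ≤ 2) (j : ℕ) :
    #{x ∈ s | 0 < f x} - 2 * j ≤ #{x ∈ s | j < f x} := by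
  induction j with
  | zero => simp
  | succ j ih =>
    have := h (j + 1) j.succ_pos
    have := card_lt_eq_card_eq_add_card_lt s f j
    lia

lemma sum_le_sq_div_four
    (h : ∀ i, 0 < i → (∃ x ∈ s, i < f x) → 2 ≤ #{x ∈ s | f x = i}) :
    ∑ x ∈ s, f x ≤ (#{x ∈ s | 0 < f x} + 1) ^ 2 / 4 := by
  obtain ⟨N, -, hsum, hsq⟩ := exists_sum_eq_and_sq_div_four_eq s f
  rw [hsum, hsq]
  exact sum_le_sum fun j _ ↦ card_lt_le_of_two_le_card_eq h j

lemma sq_div_four_le_sum (h : ∀ i, 0 < i → #{x ∈ s | f x = i} ≤ 2) :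
    (#{x ∈ s | 0 < f x} + 1) ^ 2 / 4 ≤ ∑ x ∈ s, f x := by
  obtain ⟨N, -, hsum, hsq⟩ := exists_sum_eq_and_sq_div_four_eq s f
  rw [hsum, hsq]
  exact sum_le_sum fun j _ ↦ le_card_lt_of_card_eq_le_two h j

lemma card_fiber_one_eq_two_of_sum_eq
    (h : ∀ i, 0 < i → (∃ x ∈ s, i < f x) → 2 ≤ #{x ∈ s | f x = i})
    (hs : 2 ≤ #{x ∈ s | 0 < f x})
    (hsum_sq : ∑ x ∈ s, f x = (#{x ∈ s | 0 < f x} + 1) ^ 2 / 4) :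
    #{x ∈ s | f x = 1} = 2 := by
  obtain ⟨N, hN, hsum, hsq⟩ := exists_sum_eq_and_sq_div_four_eq s f
  rw [hsum, hsq, sum_eq_sum_iff_of_le fun j _ ↦ card_lt_le_of_two_le_card_eq h j] at hsum_sq
  have htail : #{x ∈ s | 1 < f x} = #{x ∈ s | 0 < f x} - 2 * 1 := hsum_sq 1 (mem_range.mpr hN)
  have hsplit : #{x ∈ s | 0 < f x} = #{x ∈ s | f x = 1} + #{x ∈ s | 1 < f x} :=
    card_lt_eq_card_eq_add_card_lt s f 0
  lia

end LevelSets

section Distance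

variable {V : Type*} {G : SimpleGraph V} {a b u v w : V} {i : ℕ}

lemma dist_le_dist_add_one_of_adj (h : G.Adj a b) : G.dist v b ≤ G.dist v a + 1 := by
  have := h.diff_dist_adj (u := v)
  lia

lemma exists_mem_support_apply_eq {f : V → ℕ} (hf : ∀ x y, G.Adj x y → f y ≤ f x + 1)
    (p : G.Walk a b) (ha : f a ≤ i) (hb : i ≤ f b) : ∃ x ∈ p.support, f x = i := by
  induction p with
  | nil => exact ⟨_, by simp, le_antisymm ha hb⟩
  | @cons x y _ hxy q ih =>
    obtain hx | hx := ha.eq_or_lt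
    · exact ⟨x, by simp, hx⟩
    · obtain ⟨z, hz, hzi⟩ := ih ((hf x y hxy).trans hx) hb
      exact ⟨z, by simp [hz], hzi⟩

lemma dist_add_dist_of_mem_support {p : G.Walk a b} (hp : p.length = G.dist a b)
    (hw : w ∈ p.support) : G.dist a w + G.dist w b = G.dist a b := by
  classical
  rw [← length_eq_dist_of_subwalk hp (p.isSubwalk_takeUntil hw),
    ← length_eq_dist_of_subwalk hp (p.isSubwalk_dropUntil hw), ← Walk.length_append,
    p.take_spec, hp]

lemma exists_adj_dist_eq_of_dist_eq_add_one (h : G.dist v u = i + 1) :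
    ∃ w, G.Adj w u ∧ G.dist v w = i := by
  obtain ⟨p, hp⟩ := exists_walk_of_dist_ne_zero (show G.dist u v ≠ 0 by rw [dist_comm]; lia)
  cases p with
  | nil => simp at h
  | @cons _ w _ huw q =>
    refine ⟨w, huw.symm, ?_⟩
    have hq : G.dist w v ≤ q.length := dist_le q
    have hstep : G.dist v u ≤ G.dist v w + 1 := dist_le_dist_add_one_of_adj huw.symm
    rw [Walk.length_cons, dist_comm] at hp
    rw [dist_comm] at hq
    lia

lemma dist_add_dist_eq_of_dist_eq_unique (hG : G.Connected)
    (hw : ∀ x, G.dist v x = i → x = w) (ha : G.dist v a ≤ i) (hb : i ≤ G.dist v b) :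
    G.dist a w + G.dist w b = G.dist a b := by
  obtain ⟨p, hp⟩ := hG.exists_walk_length_eq_dist a b
  obtain ⟨x, hxp, hx⟩ :=
    exists_mem_support_apply_eq (fun _ _ ↦ dist_le_dist_add_one_of_adj) p ha hb
  exact dist_add_dist_of_mem_support hp (hw x hx ▸ hxp)

variable [Fintype V]

lemma card_dist_pos_add_one (hG : G.Connected) (v : V) :
    #{u | 0 < G.dist v u} + 1 = Fintype.card V := by
  classical
  have herase : ({u | 0 < G.dist v u} : Finset V) = univ.erase v := by
    ext u
    simp [Nat.pos_iff_ne_zero, hG.dist_eq_zero_iff, eq_comm]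
  rw [herase, card_erase_add_one (mem_univ v), card_univ]

lemma card_dist_eq_one [G.LocallyFinite] (v : V) : #{u | G.dist v u = 1} = G.degree v := by
  rw [← card_neighborFinset_eq_degree]
  congr 1
  ext u
  simp

lemma card_dist_eq_add_two_le [G.LocallyFinite] {d : ℕ} (hd : ∀ x, G.degree x ≤ d) (v : V)
    (i : ℕ) : #{u | G.dist v u = i + 2} ≤ #{u | G.dist v u = i + 1} * (d - 1) := by
  classical
  have hcover : ({u | G.dist v u = i + 2} : Finset V) ⊆
      ({y | G.dist v y = i + 1} : Finset V).biUnion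
        fun y ↦ {u ∈ G.neighborFinset y | G.dist v u = i + 2} := by
    intro u hu
    rw [mem_filter_univ] at hu
    obtain ⟨y, hyu, hy⟩ := exists_adj_dist_eq_of_dist_eq_add_one hu
    simpa using ⟨y, hy, hyu, hu⟩
  refine (card_le_card hcover).trans (card_biUnion_le_card_mul _ _ _ fun y hy ↦ ?_)
  rw [mem_filter_univ] at hy
  obtain ⟨x, hxy, hx⟩ := exists_adj_dist_eq_of_dist_eq_add_one hy
  have hsub : {u ∈ G.neighborFinset y | G.dist v u = i + 2} ⊆ (G.neighborFinset y).erase x := by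
    intro u hu
    rw [mem_filter] at hu
    exact mem_erase.mpr ⟨by rintro rfl; lia, hu.1⟩
  calc #{u ∈ G.neighborFinset y | G.dist v u = i + 2}
      ≤ #((G.neighborFinset y).erase x) := card_le_card hsub
    _ = G.degree y - 1 := by rw [card_erase_of_mem (by simpa using hxy.symm)]; simp
    _ ≤ d - 1 := Nat.sub_le_sub_right (hd y) 1

lemma card_dist_eq_le_two [G.LocallyFinite] (hd : ∀ x, G.degree x ≤ 2) (v : V) (hi : 0 < i) :
    #{u | G.dist v u = i} ≤ 2 := by
  induction i, hi using Nat.le_induction with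
  | base => simpa only [Nat.succ_eq_add_one, zero_add, card_dist_eq_one] using hd v
  | succ j hj ih =>
    obtain ⟨j, rfl⟩ := Nat.exists_eq_add_of_le' hj
    exact (card_dist_eq_add_two_le hd v j).trans (by simpa using ih)

end Distance

section CycleGraph

variable {V W : Type*}

lemma adj_apply_iff_of_degree_le {G : SimpleGraph V} {H : SimpleGraph W} [G.LocallyFinite]
    [H.LocallyFinite] (f : Copy G H) {a b : V} (h : H.degree (f a) ≤ G.degree a) :
    H.Adj (f a) (f b) ↔ G.Adj a b := by
  classical
  refine ⟨fun hab ↦ ?_, fun hab ↦ f.toHom.map_adj hab⟩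
  have hinj : Function.Injective f := f.injective
  have himage : (G.neighborFinset a).image f = H.neighborFinset (f a) := by
    refine eq_of_subset_of_card_le ?_ ?_
    · intro y hy
      obtain ⟨x, hx, rfl⟩ := mem_image.mp hy
      simpa using f.toHom.map_adj ((G.mem_neighborFinset a x).mp hx)
    · rwa [card_image_of_injective _ hinj, card_neighborFinset_eq_degree,
        card_neighborFinset_eq_degree]
  obtain ⟨x, hx, hxb⟩ := mem_image.mp (himage ▸ (H.mem_neighborFinset _ _).mpr hab)
  exact hinj hxb ▸ (G.mem_neighborFinset a x).mp hx

lemma isRegularOfDegree_two_cycleGraph {n : ℕ} (hn : 2 < n) :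
    (cycleGraph n).IsRegularOfDegree 2 := by
  obtain ⟨m, rfl⟩ := Nat.exists_eq_add_of_le' hn
  exact fun _ ↦ cycleGraph_degree_three_le

variable [Fintype V] {G : SimpleGraph V} [G.LocallyFinite]

lemma exists_isCycle_length_eq_card (hG : G.Connected) (h : G.IsRegularOfDegree 2) :
    ∃ (v : V) (p : G.Walk v v), p.IsCycle ∧ p.length = Fintype.card V := by
  classical
  have hncard (v : V) : (G.neighborSet v).ncard = 2 := by
    rw [← coe_neighborFinset, Set.ncard_coe_finset, card_neighborFinset_eq_degree, h v]
  have hcycles : G.IsCycles := fun v _ ↦ hncard v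
  obtain ⟨v⟩ := hG.nonempty
  obtain ⟨p, hp, hverts⟩ := hcycles.exists_cycle_toSubgraph_verts_eq_connectedComponentSupp
    (c := G.connectedComponentMk v) rfl
    (Set.nonempty_of_ncard_ne_zero (by rw [hncard]; exact two_ne_zero))
  have hsupport (w : V) : w ∈ p.support := by
    rw [← Walk.mem_verts_toSubgraph, hverts, ConnectedComponent.mem_supp_iff,
      ConnectedComponent.eq]
    exact hG.preconnected w v
  refine ⟨v, p, hp, Walk.IsHamiltonianCycle.length_eq ⟨hp, ?_⟩⟩
  refine hp.isPath_tail.isHamiltonian_of_mem fun w ↦ ?_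
  rw [Walk.support_tail_of_not_nil _ hp.not_nil]
  obtain rfl | hw := (Walk.mem_support_iff p).mp (hsupport w)
  · exact Walk.end_mem_tail_support hp.not_nil
  · exact hw

lemma nonempty_iso_cycleGraph (hG : G.Connected) (h : G.IsRegularOfDegree 2)
    (hn : 2 < Fintype.card V) : Nonempty (G ≃g cycleGraph (Fintype.card V)) := by
  obtain ⟨f⟩ := (cycleGraph_isContained_iff hn).mpr (exists_isCycle_length_eq_card hG h)
  have hbij : Function.Bijective f :=
    (Fintype.bijective_iff_injective_and_card f).mpr ⟨f.injective, Fintype.card_fin _⟩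
  refine ⟨RelIso.symm ⟨Equiv.ofBijective f hbij, ?_⟩⟩
  exact adj_apply_iff_of_degree_le f (by rw [h, isRegularOfDegree_two_cycleGraph hn])

end CycleGraph

section Transmission

variable {V : Type*} [Fintype V] {G : SimpleGraph V} {b u v w : V} {i : ℕ}

lemma transmission_add_card_mul_dist_le (hG : G.Connected) (B : Finset V)
    (hsep : ∀ a ∉ B, G.dist b w + G.dist w a ≤ G.dist b a) :
    transmission G w + Fintype.card V * G.dist b w ≤
      transmission G b + #B * (2 * G.dist b w) := by
  classical
  calc transmission G w + Fintype.card V * G.dist b w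
      = ∑ a, (G.dist w a + G.dist b w) := by simp [transmission, sum_add_distrib]
    _ ≤ ∑ a, (G.dist b a + if a ∈ B then 2 * G.dist b w else 0) := by
      refine sum_le_sum fun a _ ↦ ?_
      split_ifs with ha
      · have : G.dist w a ≤ G.dist w b + G.dist b a := hG.dist_triangle
        rw [dist_comm (u := w) (v := b)] at this
        lia
      · have := hsep a ha
        lia
    _ = transmission G b + #B * (2 * G.dist b w) := by
      simp [transmission, sum_add_distrib, sum_ite_mem]

lemma transmission_lt_of_two_mul_card_lt (hG : G.Connected) {B : Finset V}
    (hB : 2 * #B < Fintype.card V) (hne : b ≠ w)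
    (hsep : ∀ a ∉ B, G.dist b w + G.dist w a ≤ G.dist b a) :
    transmission G w < transmission G b := by
  have hle := transmission_add_card_mul_dist_le hG B hsep
  have hlt : 2 * #B * G.dist b w < Fintype.card V * G.dist b w :=
    Nat.mul_lt_mul_of_pos_right hB (hG.pos_dist_of_ne hne)
  linarith

lemma transmission_lt_or_lt_of_dist_eq_unique (hG : G.Connected) (hvw : G.dist v w = i)
    (hw : ∀ x, G.dist v x = i → x = w) (hi : 0 < i) (hu : i < G.dist v u) :
    transmission G w < transmission G v ∨ transmission G w < transmission G u := by
  classical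
  have hcard : #{x | G.dist v x < i} + #{x | i < G.dist v x} < Fintype.card V := by
    rw [← card_union_of_disjoint (disjoint_filter.mpr fun _ _ _ ↦ by lia)]
    exact card_lt_univ_of_notMem (x := w) (by simp [hvw])
  obtain hnear | hfar : 2 * #{x | G.dist v x < i} < Fintype.card V ∨
      2 * #{x | i < G.dist v x} < Fintype.card V := by lia
  · refine .inl (transmission_lt_of_two_mul_card_lt hG hnear ?_ fun a ha ↦ ?_)
    · rintro rfl
      simp only [SimpleGraph.dist_self] at hvw
      lia
    · exact (dist_add_dist_eq_of_dist_eq_unique hG hw (by simp) (by simpa using ha)).le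
  · refine .inr (transmission_lt_of_two_mul_card_lt hG hfar ?_ fun a ha ↦ ?_)
    · rintro rfl
      lia
    · rw [dist_comm, add_comm, dist_comm, dist_comm (u := u)]
      exact (dist_add_dist_eq_of_dist_eq_unique hG hw (by simpa using ha) hu.le).le

lemma two_le_card_dist_eq (hG : G.Connected) {k : ℕ} (htr : ∀ x, transmission G x = k)
    (hi : 0 < i) (hu : i < G.dist v u) : 2 ≤ #{x | G.dist v x = i} := by
  obtain ⟨p⟩ := hG.preconnected v u
  obtain ⟨w, -, hw⟩ := exists_mem_support_apply_eq (i := i)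
    (fun _ _ ↦ dist_le_dist_add_one_of_adj) p (by simp) hu.le
  by_contra! hcard
  have hunique (x : V) (hx : G.dist v x = i) : x = w :=
    card_le_one.mp (Nat.lt_succ_iff.mp hcard) x (by simpa using hx) w (by simpa using hw)
  have := transmission_lt_or_lt_of_dist_eq_unique hG hw hunique hi hu
  simp [htr] at this

lemma transmission_le_sq_div_four (hG : G.Connected) {k : ℕ} (htr : ∀ x, transmission G x = k)
    (v : V) : transmission G v ≤ Fintype.card V ^ 2 / 4 := by
  rw [← card_dist_pos_add_one hG v]
  exact sum_le_sq_div_four fun _ hi ⟨_, _, hu⟩ ↦ two_le_card_dist_eq hG htr hi hu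

lemma sq_div_four_le_transmission [G.LocallyFinite] (hG : G.Connected)
    (hd : ∀ x, G.degree x ≤ 2) (v : V) : Fintype.card V ^ 2 / 4 ≤ transmission G v := by
  rw [← card_dist_pos_add_one hG v]
  exact sq_div_four_le_sum fun _ hi ↦ card_dist_eq_le_two hd v hi

lemma isRegularOfDegree_two_of_transmission_eq [G.LocallyFinite] (hG : G.Connected)
    (hn : 2 < Fintype.card V) (htr : ∀ x, transmission G x = Fintype.card V ^ 2 / 4) :
    G.IsRegularOfDegree 2 := by
  intro v
  have hcard := card_dist_pos_add_one hG v
  rw [← card_dist_eq_one]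
  refine card_fiber_one_eq_two_of_sum_eq
    (fun _ hi ⟨_, _, hu⟩ ↦ two_le_card_dist_eq hG htr hi hu) (by lia) ?_
  rw [hcard]
  exact htr v

end Transmission

/-- If `G` is a connected `k`-transmission-regular graph on `n` vertices, then
`k ≤ ⌊n²/4⌋`; moreover, for `n > 2`, `k = ⌊n²/4⌋` holds iff `G` is the cycle `C_n`. -/
theorem transmissionRegular_upper_bound {V : Type*} [Fintype V] (G : SimpleGraph V)
    (hG : G.Connected) (k : ℕ) (htr : ∀ v : V, transmission G v = k) :
    k ≤ Fintype.card V ^ 2 / 4 ∧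
      (2 < Fintype.card V → (k = Fintype.card V ^ 2 / 4 ↔
        Nonempty (G ≃g cycleGraph (Fintype.card V)))) := by
  classical
  obtain ⟨v⟩ := hG.nonempty
  have hle : k ≤ Fintype.card V ^ 2 / 4 := htr v ▸ transmission_le_sq_div_four hG htr v
  refine ⟨hle, fun hn ↦ ⟨?_, fun ⟨e⟩ ↦ le_antisymm hle ?_⟩⟩
  · rintro rfl
    exact nonempty_iso_cycleGraph hG (isRegularOfDegree_two_of_transmission_eq hG hn htr) hn
  · have hdegree (x : V) : G.degree x ≤ 2 :=
      (e.toCopy.degree_le x).trans (isRegularOfDegree_two_cycleGraph hn _).le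
    exact htr v ▸ sq_div_four_le_transmission hG hdegree v
end

section
/- Let k ≥ 1 and let G be a linear k-tree on n ≥ k+1 vertices that has a dominating vertex (a vertex adjacent to all other vertices). Then W(G) = (k² + k)/2 + n² − kn − n. -/
open SimpleGraph Finset

/-- `G` is a *linear `k`-tree* if it admits a recursive labeling `v_1, …, v_n` of its
vertices (given here by a bijection `f` onto `Fin n`) such that the first `k+1` vertices
form a `(k+1)`-clique, and every later vertex is adjacent to exactly `k` vertices with
smaller labels, which form a `k`-clique containing a vertex whose degree in the graph
induced on the earlier vertices is `k`. -/
def IsLinearKTree {V : Type*} [Fintype V] (k : ℕ) (G : SimpleGraph V) : Prop :=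
  ∃ f : V ≃ Fin (Fintype.card V),
    (∀ u w : V, (f u : ℕ) < k + 1 → (f w : ℕ) < k + 1 → u ≠ w → G.Adj u w) ∧
    ∀ u : V, k + 1 ≤ (f u : ℕ) →
      {w : V | f w < f u ∧ G.Adj w u}.ncard = k ∧
      (∀ w w' : V, f w < f u → f w' < f u → G.Adj w u → G.Adj w' u → w ≠ w' → G.Adj w w') ∧
      ∃ w : V, f w < f u ∧ G.Adj w u ∧ {w' : V | f w' < f u ∧ G.Adj w w'}.ncard = k

/-!
When no two vertices are further than two apart, a pair of distinct vertices contributes `1` to the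
Wiener index if it is an edge and `2` otherwise, so `W(G) = n(n - 1) - |E(G)|`; a dominating vertex
bounds the distances in this way. Counting each edge at its later endpoint, a linear `k`-tree has
`∑ i < n, min k i = kn - (k + 1).choose 2` edges. The count sees only how many earlier neighbours
each vertex has, so the formula holds for every maximal `k`-degenerate graph of diameter at most
two.
-/

section Distance

variable {V : Type*} {G : SimpleGraph V} {u v : V}

lemma ediam_le_two_of_isUniversal (h : G.IsUniversal v) : G.ediam ≤ 2 :=
  calc
    G.ediam ≤ 2 * G.eccent v := ediam_le_two_mul_eccent v
    _ ≤ 2 * 1 := by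
      gcongr
      exact (eccent_le_one_iff v).2 fun _ huv => h huv
    _ = 2 := mul_one 2

lemma dist_eq_two_of_ediam_le_two (hdiam : G.ediam ≤ 2) (hne : u ≠ v) (hadj : ¬ G.Adj u v) :
    G.dist u v = 2 := by
  have hle : G.edist u v ≤ 2 := edist_le_ediam.trans hdiam
  have hreach : G.Reachable u v :=
    edist_ne_top_iff_reachable.1 (hle.trans_lt (ENat.natCast_lt_top 2)).ne
  have hdist : G.dist u v ≤ 2 := ENat.toNat_le_of_le_natCast hle
  exact hdist.antisymm (hreach.one_lt_dist_of_ne_of_not_adj hne hadj)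

variable [Fintype V] [DecidableRel G.Adj]

lemma sum_dist_add_degree (hdiam : G.ediam ≤ 2) (u : V) :
    ∑ v, G.dist u v + G.degree u = 2 * (Fintype.card V - 1) := by
  classical
  have hpair : ∀ v ∈ univ.erase u, G.dist u v + (if G.Adj u v then 1 else 0) = 2 := by
    intro v hv
    by_cases hadj : G.Adj u v
    · simp [hadj, dist_eq_one_iff_adj.2 hadj]
    · simp [hadj, dist_eq_two_of_ediam_le_two hdiam (ne_of_mem_erase hv).symm hadj]
  have hdist : ∑ v, G.dist u v = ∑ v ∈ univ.erase u, G.dist u v :=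
    (sum_erase _ dist_self).symm
  have hdegree : G.degree u = ∑ v ∈ univ.erase u, if G.Adj u v then 1 else 0 := by
    have hself : (if G.Adj u u then 1 else 0) = 0 := if_neg G.irrefl
    rw [sum_erase (f := fun v => if G.Adj u v then 1 else 0) _ hself, ← card_filter,
      ← card_neighborFinset_eq_degree, neighborFinset_eq_filter]
  rw [hdist, hdegree, ← sum_add_distrib, sum_congr rfl hpair, sum_const,
    card_erase_of_mem (mem_univ u), card_univ, smul_eq_mul, mul_comm]

lemma wienerIndex_add_card_edgeFinset (hdiam : G.ediam ≤ 2) :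
    wienerIndex G + #G.edgeFinset = Fintype.card V * (Fintype.card V - 1) := by
  have hrow (u : V) : ∑ v, (G.dist u v : ℚ) + G.degree u = 2 * (Fintype.card V - 1) := by
    have hpos : 0 < Fintype.card V := Fintype.card_pos_iff.2 ⟨u⟩
    rw [← Nat.cast_pred hpos]
    exact_mod_cast sum_dist_add_degree hdiam u
  have hdegrees : ∑ u, (G.degree u : ℚ) = 2 * #G.edgeFinset := by
    exact_mod_cast G.sum_degrees_eq_twice_card_edges
  have htotal : ∑ u, ∑ v, (G.dist u v : ℚ) + 2 * #G.edgeFinset =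
      Fintype.card V * (2 * (Fintype.card V - 1)) := by
    rw [← hdegrees, ← sum_add_distrib, sum_congr rfl fun u _ => hrow u, sum_const, card_univ,
      nsmul_eq_mul]
  unfold wienerIndex
  linarith

end Distance

lemma card_edgeFinset_eq_sum_card_lt_adj {V α : Type*} [Fintype V] [LinearOrder α]
    {G : SimpleGraph V} [DecidableRel G.Adj] {f : V → α} (hf : f.Injective) :
    #G.edgeFinset = ∑ u, #{v | f v < f u ∧ G.Adj v u} := by
  have hdegree (u : V) :
      G.degree u = #{v | f v < f u ∧ G.Adj v u} + #{v | f u < f v ∧ G.Adj u v} := by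
    classical
    rw [← card_neighborFinset_eq_degree, neighborFinset_eq_filter, ← card_union_of_disjoint]
    · congr 1
      ext v
      have hne (hadj : G.Adj u v) : f v ≠ f u := hf.ne hadj.ne'
      simp only [mem_filter, mem_univ, true_and, mem_union, G.adj_comm v u]
      grind
    · exact disjoint_filter.2 fun v _ hlt hgt => hlt.1.asymm hgt.1
  have hdouble : ∑ u, #{v | f u < f v ∧ G.Adj u v} = ∑ u, #{v | f v < f u ∧ G.Adj v u} :=
    sum_card_bipartiteAbove_eq_sum_card_bipartiteBelow fun u v => f u < f v ∧ G.Adj u v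
  have htwice : 2 * #G.edgeFinset = 2 * ∑ u, #{v | f v < f u ∧ G.Adj v u} := by
    rw [← sum_degrees_eq_twice_card_edges, sum_congr rfl fun u _ => hdegree u, sum_add_distrib,
      hdouble, two_mul]
  exact Nat.eq_of_mul_eq_mul_left two_pos htwice

lemma sum_range_min_add_choose_two {k n : ℕ} (h : k ≤ n) :
    ∑ i ∈ range n, min k i + (k + 1).choose 2 = k * n := by
  induction n, h using Nat.le_induction with
  | base =>
    have hmin : ∑ i ∈ range k, min k i = ∑ i ∈ range k, i :=
      sum_congr rfl fun i hi => min_eq_right (mem_range.1 hi).le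
    rw [hmin, Nat.choose_two_right, ← sum_range_id, sum_range_succ, ← add_assoc, ← mul_two,
      sum_range_id_mul_two, Nat.mul_sub_one, Nat.sub_add_cancel (Nat.le_mul_self k)]
  | succ n hkn ih =>
    rw [sum_range_succ, min_eq_left hkn, add_right_comm, ih, Nat.mul_succ]

/-- A *maximal `k`-degenerate graph*, described by a construction sequence: its vertices can be
labelled `0, …, n - 1` so that the vertex labelled `i` has exactly `min k i` neighbours with smaller
labels. Every `k`-tree is such a graph. -/
def IsMaximalKDegenerate {V : Type*} [Fintype V] (k : ℕ) (G : SimpleGraph V) : Prop :=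
  ∃ f : V ≃ Fin (Fintype.card V), ∀ u, {v | f v < f u ∧ G.Adj v u}.ncard = min k (f u)

section MaximalKDegenerate

variable {V : Type*} [Fintype V] {k : ℕ} {G : SimpleGraph V}

lemma IsLinearKTree.isMaximalKDegenerate (hG : IsLinearKTree k G) :
    IsMaximalKDegenerate k G := by
  obtain ⟨f, hclique, hlater⟩ := hG
  refine ⟨f, fun u => ?_⟩
  by_cases hu : k + 1 ≤ (f u : ℕ)
  · rw [(hlater u hu).1, min_eq_left (by lia)]
  · have hadj (v : V) (hv : f v < f u) : G.Adj v u :=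
      hclique v u (by lia) (by lia) fun h => hv.ne (congrArg f h)
    have hlower : {v | f v < f u ∧ G.Adj v u} = f ⁻¹' Set.Iio (f u) :=
      Set.ext fun v => and_iff_left_of_imp (hadj v)
    rw [hlower, Set.ncard_preimage_of_injective_subset_range f.injective (by simp),
      ← coe_Iio, Set.ncard_coe_finset, Fin.card_Iio, min_eq_right (by lia)]

lemma IsMaximalKDegenerate.card_edgeFinset_add_choose_two [DecidableRel G.Adj]
    (hG : IsMaximalKDegenerate k G) (hn : k ≤ Fintype.card V) :
    #G.edgeFinset + (k + 1).choose 2 = k * Fintype.card V := by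
  obtain ⟨f, hf⟩ := hG
  have hlower (u : V) : #{v | f v < f u ∧ G.Adj v u} = min k (f u) := by
    rw [← hf u, ← Set.ncard_coe_finset, coe_filter_univ]
  have hedges : #G.edgeFinset = ∑ i ∈ range (Fintype.card V), min k i := by
    rw [card_edgeFinset_eq_sum_card_lt_adj f.injective, sum_congr rfl fun u _ => hlower u,
      f.sum_comp fun i => min k (i : ℕ), Fin.sum_univ_eq_sum_range]
  rw [hedges, sum_range_min_add_choose_two hn]

end MaximalKDegenerate

theorem wienerIndex_linearKTree_dominating_general {V : Type*} [Fintype V]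
    {k : ℕ} {G : SimpleGraph V} (hG : IsMaximalKDegenerate k G)
    (hn : k ≤ Fintype.card V) (hdiam : G.ediam ≤ 2) :
    wienerIndex G =
      ((k : ℚ) ^ 2 + k) / 2 + (Fintype.card V : ℚ) ^ 2 - k * Fintype.card V
        - Fintype.card V := by
  classical
  have hwiener := wienerIndex_add_card_edgeFinset hdiam
  have hedges : (#G.edgeFinset : ℚ) + (k + 1) * k / 2 = k * Fintype.card V := by
    have hchoose := Nat.cast_choose_two ℚ (k + 1)
    rw [Nat.cast_succ, add_sub_cancel_right] at hchoose
    rw [← hchoose]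
    exact_mod_cast hG.card_edgeFinset_add_choose_two hn
  linear_combination hwiener - hedges

/-- A linear `k`-tree (`k ≥ 1`) on `n ≥ k + 1` vertices having a dominating vertex has
Wiener index exactly `(k² + k)/2 + n² - kn - n`. -/
theorem wienerIndex_linearKTree_dominating {V : Type*} [Fintype V]
    (k : ℕ) (hk : 1 ≤ k) (G : SimpleGraph V) (hG : IsLinearKTree k G)
    (hn : k + 1 ≤ Fintype.card V)
    (hdom : ∃ v : V, ∀ u : V, u ≠ v → G.Adj v u) :
    wienerIndex G =
      ((k : ℚ) ^ 2 + k) / 2 + (Fintype.card V : ℚ) ^ 2 - k * Fintype.card V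
        - Fintype.card V := by
  obtain ⟨v, hv⟩ := hdom
  exact wienerIndex_linearKTree_dominating_general hG.isMaximalKDegenerate (by lia)
    (ediam_le_two_of_isUniversal fun u huv => hv u huv.symm)
end

section
/- Let k ≥ 1 and let G be a linear k-tree on n ≥ k+1 vertices. Then the Wiener index of G satisfies W(G) ≤ (j+1)(2j²k² + jk(3 + k − 6n) + 6n² − 6n)/12, where j = ⌊(n−1)/k⌋; moreover, equality is attained by the linear k-tree on vertices v_1,…,v_n in which v_i is adjacent to v_{i−1},…,v_{i−k} (i.e., each vertex is adjacent to exactly the k immediately preceding vertices in the labeling, whenever they exist). -/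
open SimpleGraph Finset

/-- The `k`-th power of a path on `n` vertices: vertex `i` is adjacent to vertex `j`
iff `i ≠ j` and `|i - j| ≤ k`; i.e., each vertex is adjacent to exactly the `k`
immediately preceding vertices in the labeling (whenever they exist). -/
def pathPower (n k : ℕ) : SimpleGraph (Fin n) :=
  SimpleGraph.fromRel (fun i j => (i : ℕ) ≤ (j : ℕ) + k ∧ (j : ℕ) ≤ (i : ℕ) + k)

/-!
A recursive labeling of a linear `k`-tree makes every vertex adjacent to all earlier vertices or to
at least `k` of them. Let `A` and `B` be disjoint nonempty sets of vertices in an initial segment,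
with no edge between them, and let `b` be the larger of their two minima. The earlier neighbours of
`b` avoid `A ∪ B` and miss an earlier vertex, so there are at least `k` of them: every separator of
an initial segment has at least `k` vertices.

Apply this to the vertices up to `u`, with `A` those at distance at most `t` from `u` and `B` those
at distance more than `t + 1`. The separator is the sphere of radius `t + 1`, so each sphere around
`u` contains at least `k` earlier vertices until none is left, and the vertex with label `m`
(counting from `0`) has at most `m - t * k` earlier vertices at distance more than `t`. Summing over
`m` and `t` gives `W(G) ≤ ∑ t ≤ j, (n - t * k).choose 2`. In the `k`-th power of a path, labels
change by at most `k` along an edge, so equality holds throughout.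
-/

section Distance

variable {V W : Type*} {G : SimpleGraph V} {H : SimpleGraph W}

theorem edist_hom_le (φ : G →g H) (u v : V) : H.edist (φ u) (φ v) ≤ G.edist u v :=
  le_iInf fun p => (edist_le (p.map φ)).trans_eq (congrArg _ (p.length_map φ))

theorem dist_iso (e : G ≃g H) (u v : V) : H.dist (e u) (e v) = G.dist u v := by
  refine congrArg ENat.toNat (le_antisymm (edist_hom_le e.toHom u v) ?_)
  simpa using edist_hom_le e.symm.toHom (e u) (e v)

theorem wienerIndex_iso [Fintype V] [Fintype W] (e : G ≃g H) :
    wienerIndex G = wienerIndex H := by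
  simp only [wienerIndex, ← dist_iso e]
  rw [← e.toEquiv.sum_comp fun u => ∑ v, (H.dist u v : ℚ)]
  simp only [← e.toEquiv.sum_comp fun v => (H.dist _ v : ℚ)]
  rfl

theorem natCast_dist_le_edist (u v : V) : (G.dist u v : ℕ∞) ≤ G.edist u v :=
  ENat.natCast_toNat_le_self _

theorem one_lt_edist_of_le_of_add_one_lt {u v w : V} {t : ℕ∞} (hv : G.edist u v ≤ t)
    (hw : t + 1 < G.edist u w) : 1 < G.edist v w := by
  by_contra! hvw
  exact (hw.trans_le SimpleGraph.edist_triangle).not_ge (add_le_add hv hvw)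

end Distance

section LayerCake

theorem sum_eq_sum_card_lt {ι : Type*} (s : Finset ι) (d : ι → ℕ) {T : ℕ}
    (hT : ∀ i ∈ s, d i ≤ T) : ∑ i ∈ s, d i = ∑ t ∈ range T, #{i ∈ s | t < d i} := by
  simp only [card_filter]
  rw [sum_comm]
  refine sum_congr rfl fun i hi => ?_
  have layers : {t ∈ range T | t < d i} = range (d i) := by
    ext t
    simpa using fun ht => ht.trans_le (hT i hi)
  rw [← card_filter, layers, card_range]

variable {α : Type*} [Fintype α] [LinearOrder α] [LocallyFiniteOrderBot α]

theorem sum_sum_eq_two_nsmul_sum_Iio {M : Type*} [AddCommMonoid M] {d : α → α → M}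
    (symm : ∀ u v, d u v = d v u) (diag : ∀ u, d u u = 0) :
    ∑ u, ∑ v, d u v = 2 • ∑ u, ∑ v ∈ Iio u, d u v := by
  have row (u : α) :
      ∑ v, d u v = ∑ v, ((if v < u then d u v else 0) + if u < v then d v u else 0) := by
    refine sum_congr rfl fun v _ => ?_
    rcases lt_trichotomy v u with h | rfl | h
    · simp [h, h.not_gt]
    · simp [diag]
    · simp [h, h.not_gt, symm u v]
  have below (u : α) : ∑ v ∈ Iio u, d u v = ∑ v, if v < u then d u v else 0 := by
    rw [← sum_filter]
    exact sum_congr (by ext; simp) fun _ _ => rfl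
  simp only [row, below, sum_add_distrib, two_nsmul]
  exact congrArg _ sum_comm

theorem wienerIndex_eq_sum_card_lt_dist {G : SimpleGraph α} {T : ℕ}
    (hT : ∀ u, ∀ v < u, G.dist u v ≤ T) :
    wienerIndex G = ↑(∑ t ∈ range T, ∑ u, #{v ∈ Iio u | t < G.dist u v}) := by
  have half : ∑ u, ∑ v, G.dist u v = 2 • ∑ u, ∑ v ∈ Iio u, G.dist u v :=
    sum_sum_eq_two_nsmul_sum_Iio (fun _ _ => dist_comm) (fun _ => dist_self)
  have layered (u : α) :=
    sum_eq_sum_card_lt (Iio u) (G.dist u) fun v hv => hT u v (mem_Iio.1 hv)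
  rw [sum_comm, ← sum_congr rfl fun u _ => layered u, wienerIndex]
  rw [div_eq_iff two_ne_zero, mul_comm]
  exact_mod_cast half

end LayerCake

section BinomialSums

theorem sum_range_sub_eq_choose_two (n a : ℕ) : ∑ m ∈ range n, (m - a) = (n - a).choose 2 := by
  induction n with
  | zero => simp
  | succ n ih =>
    rw [sum_range_succ, ih]
    rcases le_or_gt a n with h | h
    · rw [Nat.succ_sub h, Nat.choose_succ_succ' _ 1, Nat.choose_one_right, add_comm]
    · simp [Nat.sub_eq_zero_of_le h, Nat.sub_eq_zero_of_le h.le]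

theorem sum_range_choose_two_sub_mul {K : Type*} [Field K] [CharZero K] {n k j : ℕ}
    (hj : j * k ≤ n) :
    ((∑ t ∈ range (j + 1), (n - t * k).choose 2 : ℕ) : K) =
      (j + 1) * (2 * j ^ 2 * k ^ 2 + j * k * (3 + k - 6 * n) + 6 * n ^ 2 - 6 * n) / 12 := by
  induction j with
  | zero =>
    rw [zero_add, sum_range_one, zero_mul, Nat.sub_zero, Nat.cast_choose_two]
    push_cast
    ring
  | succ j ih =>
    rw [sum_range_succ, Nat.cast_add, ih (by grind), Nat.cast_choose_two, Nat.cast_sub hj]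
    push_cast
    ring

end BinomialSums

section BackDegree

variable {α : Type*} [LinearOrder α] [LocallyFiniteOrderBot α] {G : SimpleGraph α} {k : ℕ}

open Classical in
/-- Every vertex is adjacent to all earlier vertices or to at least `k` of them, as in a recursive
labeling of a `k`-tree. The order of `α` plays the role of the labeling. -/
def HasMinBackDegree (k : ℕ) (G : SimpleGraph α) : Prop :=
  ∀ v, min #(Iio v) k ≤ #{w ∈ Iio v | G.Adj w v}

namespace HasMinBackDegree

theorem le_card_separator (hG : HasMinBackDegree k G) {s A B : Finset α}
    (hs : IsLowerSet (s : Set α)) (hA : A.Nonempty) (hB : B.Nonempty) (hAs : A ⊆ s) (hBs : B ⊆ s)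
    (hAB : ∀ a ∈ A, ∀ b ∈ B, 1 < G.edist a b) : k ≤ #(s \ (A ∪ B)) := by
  classical
  wlog hmin : A.min' hA ≤ B.min' hB generalizing A B
  · rw [union_comm]
    exact this hB hA hBs hAs (fun b hb a ha => edist_comm (G := G) ▸ hAB a ha b hb)
      (le_of_not_ge hmin)
  set a := A.min' hA
  set b := B.min' hB
  have ha : a ∈ A := A.min'_mem hA
  have hb : b ∈ B := B.min'_mem hB
  have not_adj : ∀ w ∈ A, ¬ G.Adj w b := fun w hw hadj =>
    (hAB w hw b hb).not_ge (edist_le_one_iff_adj_or_eq.2 (.inl hadj))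
  have hab : a < b := hmin.lt_of_ne fun h =>
    (hAB a ha b hb).not_ge (edist_le_one_iff_adj_or_eq.2 (.inr h))
  have back_ssubset : {w ∈ Iio b | G.Adj w b} ⊂ Iio b :=
    filter_ssubset.2 ⟨a, mem_Iio.2 hab, not_adj a ha⟩
  have back_subset : {w ∈ Iio b | G.Adj w b} ⊆ s \ (A ∪ B) := by
    intro w hw
    obtain ⟨hwb, hadj⟩ := mem_filter.1 hw
    rw [mem_Iio] at hwb
    simp only [mem_sdiff, mem_union, not_or]
    exact ⟨hs hwb.le (hBs hb), fun hwA => not_adj w hwA hadj,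
      fun hwB => hwb.not_ge (B.min'_le w hwB)⟩
  have min_le_back := hG b
  have back_lt := card_lt_card back_ssubset
  have back_le := card_le_card back_subset
  omega

theorem card_lt_edist_add_one_add_le (hG : HasMinBackDegree k G) {u : α} {t : ℕ∞}
    (hne : {w ∈ Iio u | t + 1 < G.edist u w}.Nonempty) :
    #{w ∈ Iio u | t + 1 < G.edist u w} + k ≤ #{w ∈ Iio u | t < G.edist u w} := by
  set near := {w ∈ Iic u | G.edist u w ≤ t}
  set far := {w ∈ Iio u | t + 1 < G.edist u w}
  have separated (a) (ha : a ∈ near) (b) (hb : b ∈ far) : 1 < G.edist a b :=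
    one_lt_edist_of_le_of_add_one_lt (mem_filter.1 ha).2 (mem_filter.1 hb).2
  have hsep : k ≤ #(Iic u \ (near ∪ far)) := by
    refine hG.le_card_separator (by simpa using isLowerSet_Iic u) ⟨u, by simp [near]⟩ hne
      (filter_subset _ _) ?_ separated
    exact (filter_subset _ _).trans Iio_subset_Iic_self
  have sphere_subset :
      Iic u \ (near ∪ far) ⊆ {w ∈ Iio u | t < G.edist u w} \ far := by
    intro w hw
    simp only [mem_sdiff, mem_union, not_or, mem_Iic] at hw
    obtain ⟨hwu, hnear, hfar⟩ := hw
    have beyond : t < G.edist u w := by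
      by_contra! h
      exact hnear (mem_filter.2 ⟨mem_Iic.2 hwu, h⟩)
    have hne : w ≠ u := by
      rintro rfl
      simp at beyond
    exact mem_sdiff.2 ⟨mem_filter.2 ⟨mem_Iio.2 (hwu.lt_of_ne hne), beyond⟩, hfar⟩
  have far_subset : far ⊆ {w ∈ Iio u | t < G.edist u w} :=
    monotone_filter_right _ fun w _ hw => lt_of_le_of_lt le_self_add hw
  have card_split := card_sdiff_add_card_eq_card far_subset
  have sphere_le := card_le_card sphere_subset
  omega

theorem card_lt_edist_le (hG : HasMinBackDegree k G) (u : α) (t : ℕ) :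
    #{w ∈ Iio u | (t : ℕ∞) < G.edist u w} ≤ #(Iio u) - t * k := by
  induction t with
  | zero => simpa using card_filter_le (Iio u) _
  | succ t ih =>
    rw [Nat.cast_succ]
    rcases eq_empty_or_nonempty {w ∈ Iio u | (t : ℕ∞) + 1 < G.edist u w} with h | h
    · rw [h]
      exact Nat.zero_le _
    · have layer := hG.card_lt_edist_add_one_add_le h
      grind

theorem card_lt_dist_le (hG : HasMinBackDegree k G) (u : α) (t : ℕ) :
    #{w ∈ Iio u | t < G.dist u w} ≤ #(Iio u) - t * k := by
  refine (card_le_card ?_).trans (hG.card_lt_edist_le u t)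
  refine monotone_filter_right _ fun w _ hw => ?_
  exact lt_of_lt_of_le (Nat.cast_lt.2 hw) (natCast_dist_le_edist u w)

theorem edist_le (hG : HasMinBackDegree k G) {u w : α} (hw : w < u) {t : ℕ}
    (ht : #(Iio u) ≤ t * k) : G.edist u w ≤ t := by
  have empty : {v ∈ Iio u | (t : ℕ∞) < G.edist u v} = ∅ := by
    simpa [Nat.sub_eq_zero_of_le ht] using hG.card_lt_edist_le u t
  exact not_lt.1 (filter_eq_empty_iff.1 empty (mem_Iio.2 hw))

theorem reachable (hG : HasMinBackDegree k G) (hk : 1 ≤ k) {u w : α} (hw : w < u) :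
    G.Reachable u w :=
  reachable_of_edist_ne_top <| ne_top_of_le_ne_top (ENat.natCast_ne_top _) <|
    hG.edist_le hw (Nat.le_mul_of_pos_right _ hk)

end HasMinBackDegree

end BackDegree

section FinLabels

variable {n k : ℕ}

namespace HasMinBackDegree

theorem wienerIndex_eq {G : SimpleGraph (Fin n)} (hG : HasMinBackDegree k G) (hk : 1 ≤ k) :
    wienerIndex G =
      ↑(∑ t ∈ range ((n - 1) / k + 1), ∑ u, #{v ∈ Iio u | t < G.dist u v}) := by
  refine wienerIndex_eq_sum_card_lt_dist fun u v hv => ?_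
  have label_le : #(Iio u) ≤ ((n - 1) / k + 1) * k := by
    have label_bound := Nat.lt_div_mul_add (a := n - 1) hk
    rw [Fin.card_Iio]
    grind
  exact_mod_cast (natCast_dist_le_edist u v).trans (hG.edist_le hv label_le)

theorem wienerIndex_le {G : SimpleGraph (Fin n)} (hG : HasMinBackDegree k G) (hk : 1 ≤ k) :
    wienerIndex G ≤ ↑(∑ t ∈ range ((n - 1) / k + 1), (n - t * k).choose 2) := by
  rw [hG.wienerIndex_eq hk, Nat.cast_le]
  refine sum_le_sum fun t _ => ?_
  rw [← sum_range_sub_eq_choose_two, ← Fin.sum_univ_eq_sum_range fun m => m - t * k]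
  exact sum_le_sum fun u _ => (hG.card_lt_dist_le u t).trans_eq (by rw [Fin.card_Iio])

end HasMinBackDegree

theorem IsLinearKTree.exists_hasMinBackDegree {V : Type*} [Fintype V] {G : SimpleGraph V}
    (hG : IsLinearKTree k G) :
    ∃ f : V ≃ Fin (Fintype.card V), HasMinBackDegree k (G.comap f.symm) := by
  classical
  obtain ⟨f, clique, back⟩ := hG
  refine ⟨f, fun v => ?_⟩
  rcases lt_or_ge (v : ℕ) (k + 1) with hv | hv
  · refine (min_le_left _ _).trans (card_le_card fun w hw => mem_filter.2 ⟨hw, ?_⟩)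
    have hwv : w < v := mem_Iio.1 hw
    refine clique _ _ ?_ ?_ (f.symm.injective.ne hwv.ne) <;> simp <;> omega
  · obtain ⟨ncard_back, -⟩ := back (f.symm v) (by simpa using hv)
    rw [f.apply_symm_apply] at ncard_back
    refine (min_le_right _ _).trans_eq ?_
    rw [← ncard_back, ← Set.ncard_image_of_injective _ f.injective, ← Set.ncard_coe_finset]
    congr 1
    ext w
    simp [f.image_eq_preimage_symm]

theorem pathPower_adj {i j : Fin n} :
    (pathPower n k).Adj i j ↔ i ≠ j ∧ (i : ℕ) ≤ j + k ∧ (j : ℕ) ≤ i + k := by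
  simp only [pathPower, fromRel_adj]
  tauto

theorem hasMinBackDegree_pathPower : HasMinBackDegree k (pathPower n k) := by
  classical
  intro v
  let first : Fin n := ⟨v - k, by omega⟩
  have window_subset : Ico first v ⊆ {w ∈ Iio v | (pathPower n k).Adj w v} := by
    intro w hw
    simp only [mem_Ico, Fin.le_def, Fin.lt_def, first] at hw
    simp only [mem_filter, mem_Iio, pathPower_adj, ne_eq, Fin.ext_iff, Fin.lt_def]
    omega
  refine le_trans ?_ (card_le_card window_subset)
  simp only [Fin.card_Iio, Fin.card_Ico, first]
  omega

theorem le_add_length_mul_of_pathPower_walk {i j : Fin n} (p : (pathPower n k).Walk i j) :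
    (i : ℕ) ≤ j + p.length * k := by
  induction p with
  | nil => simp
  | cons h p ih =>
    have first_step := (pathPower_adj.1 h).2.1
    rw [Walk.length_cons, add_mul]
    omega

theorem card_lt_dist_pathPower (hk : 1 ≤ k) (u : Fin n) (t : ℕ) :
    #{w ∈ Iio u | t < (pathPower n k).dist u w} = u - t * k := by
  apply le_antisymm
  · simpa using hasMinBackDegree_pathPower.card_lt_dist_le u t
  let bound : Fin n := ⟨u - t * k, by omega⟩
  rw [show u - t * k = #(Iio bound) from (Fin.card_Iio bound).symm]
  refine card_le_card fun w hw => ?_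
  have hwt : (w : ℕ) < u - t * k := Fin.lt_def.1 (mem_Iio.1 hw)
  have hwu : w < u := by omega
  obtain ⟨p, hp⟩ := (hasMinBackDegree_pathPower.reachable hk hwu).exists_walk_length_eq_dist
  have hpw := le_add_length_mul_of_pathPower_walk p
  refine mem_filter.2 ⟨mem_Iio.2 hwu, hp ▸ Nat.lt_of_mul_lt_mul_right (a := k) ?_⟩
  omega

theorem wienerIndex_pathPower (hk : 1 ≤ k) :
    wienerIndex (pathPower n k) = ↑(∑ t ∈ range ((n - 1) / k + 1), (n - t * k).choose 2) := by
  rw [hasMinBackDegree_pathPower.wienerIndex_eq hk, Nat.cast_inj]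
  refine sum_congr rfl fun t _ => ?_
  simp only [card_lt_dist_pathPower hk]
  rw [Fin.sum_univ_eq_sum_range fun m => m - t * k, sum_range_sub_eq_choose_two]

end FinLabels

theorem wienerIndex_linearKTree_upper_bound_general {V : Type*} [Fintype V]
    (k : ℕ) (hk : 1 ≤ k) (G : SimpleGraph V) (f : V ≃ Fin (Fintype.card V))
    (hG : HasMinBackDegree k (G.comap f.symm)) :
    (wienerIndex G ≤
      (((Fintype.card V - 1) / k : ℕ) + 1 : ℚ) *
        (2 * (((Fintype.card V - 1) / k : ℕ) : ℚ) ^ 2 * (k : ℚ) ^ 2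
          + (((Fintype.card V - 1) / k : ℕ) : ℚ) * k * (3 + k - 6 * Fintype.card V)
          + 6 * (Fintype.card V : ℚ) ^ 2 - 6 * Fintype.card V) / 12) ∧
    wienerIndex (pathPower (Fintype.card V) k) =
      (((Fintype.card V - 1) / k : ℕ) + 1 : ℚ) *
        (2 * (((Fintype.card V - 1) / k : ℕ) : ℚ) ^ 2 * (k : ℚ) ^ 2
          + (((Fintype.card V - 1) / k : ℕ) : ℚ) * k * (3 + k - 6 * Fintype.card V)
          + 6 * (Fintype.card V : ℚ) ^ 2 - 6 * Fintype.card V) / 12 := by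
  have hj : (Fintype.card V - 1) / k * k ≤ Fintype.card V :=
    (Nat.div_mul_le_self _ _).trans (Nat.sub_le _ _)
  rw [← sum_range_choose_two_sub_mul hj, ← wienerIndex_iso (Iso.comap f.symm G)]
  exact ⟨hG.wienerIndex_le hk, wienerIndex_pathPower hk⟩

/-- A linear `k`-tree (`k ≥ 1`) on `n ≥ k + 1` vertices has Wiener index at most
`(j+1)(2j²k² + jk(3 + k - 6n) + 6n² - 6n)/12`, where `j = ⌊(n-1)/k⌋`; moreover, this
bound is attained by the linear `k`-tree in which each vertex is adjacent to exactly
the `k` immediately preceding vertices in the labeling. -/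
theorem wienerIndex_linearKTree_upper_bound {V : Type*} [Fintype V]
    (k : ℕ) (hk : 1 ≤ k) (G : SimpleGraph V) (hG : IsLinearKTree k G)
    (hn : k + 1 ≤ Fintype.card V) :
    (wienerIndex G ≤
      (((Fintype.card V - 1) / k : ℕ) + 1 : ℚ) *
        (2 * (((Fintype.card V - 1) / k : ℕ) : ℚ) ^ 2 * (k : ℚ) ^ 2
          + (((Fintype.card V - 1) / k : ℕ) : ℚ) * k * (3 + k - 6 * Fintype.card V)
          + 6 * (Fintype.card V : ℚ) ^ 2 - 6 * Fintype.card V) / 12) ∧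
    wienerIndex (pathPower (Fintype.card V) k) =
      (((Fintype.card V - 1) / k : ℕ) + 1 : ℚ) *
        (2 * (((Fintype.card V - 1) / k : ℕ) : ℚ) ^ 2 * (k : ℚ) ^ 2
          + (((Fintype.card V - 1) / k : ℕ) : ℚ) * k * (3 + k - 6 * Fintype.card V)
          + 6 * (Fintype.card V : ℚ) ^ 2 - 6 * Fintype.card V) / 12 := by
  obtain ⟨f, hf⟩ := hG.exists_hasMinBackDegree
  exact wienerIndex_linearKTree_upper_bound_general k hk G f hf
end
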